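/- For all natural numbers n and m, each of the Möbius strip boards (4+2n)″×(3+2m), (5+2n)″×(4+2m), (4+2n)″×(5+2m), (6+2n)″×(6+2m), and (8+2n)″×(4+2m) admits a fault-free domino tiling. -/

import Mathlib

/-- Adjacency on the Möbius strip board `a″ × b` (height `a`, length `b`):
cells `(i,j)` and `(i+1,j)` (vertical neighbors), or `(i,j)` and `(i,j+1)`
(horizontal neighbors), or `(i, b-1)` and `(a-1-i, 0)` (horizontal neighbors
across the half-twisted seam). -/
def mobAdj (a b : ℕ) (c d : Fin a × Fin b) : Prop :=
  (c.2 = d.2 ∧ ((c.1 : ℕ) + 1 = (d.1 : ℕ) ∨ (d.1 : ℕ) + 1 = (c.1 : ℕ))) ∨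
  (c.1 = d.1 ∧ ((c.2 : ℕ) + 1 = (d.2 : ℕ) ∨ (d.2 : ℕ) + 1 = (c.2 : ℕ))) ∨
  ((c.2 : ℕ) = b - 1 ∧ (d.2 : ℕ) = 0 ∧ (d.1 : ℕ) = a - 1 - (c.1 : ℕ)) ∨
  ((d.2 : ℕ) = b - 1 ∧ (c.2 : ℕ) = 0 ∧ (c.1 : ℕ) = a - 1 - (d.1 : ℕ))

/-- A tiling of the Möbius strip board: a set of dominoes (unordered pairs of
adjacent cells) such that every cell belongs to exactly one domino. -/
def mobIsTiling (a b : ℕ) (T : Set (Sym2 (Fin a × Fin b))) : Prop :=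
  (∀ p ∈ T, ∃ c d, mobAdj a b c d ∧ p = s(c, d)) ∧
  (∀ x : Fin a × Fin b, ∃! p, p ∈ T ∧ x ∈ p)

/-- A tiling of the Möbius strip board is fault-free if:
* every horizontal fault-line indexed by `i` with `i + 1 < a` is crossed — because
  of the half-twist the cut between rows `i` and `i+1` is identified with the cut
  between rows `a-2-i` and `a-1-i`, so it is crossed by a vertical domino on rows
  `(k, k+1)` with `k = i` or `k = a-2-i`;
* every vertical fault-line between columns `j` and `j+1` (for `j + 1 < b`) is
  crossed by a horizontal domino `{(i,j),(i,j+1)}`;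
* the seam cut is crossed by a wrapping domino `{(i,b-1),(a-1-i,0)}`. -/
def mobFaultFree (a b : ℕ) (T : Set (Sym2 (Fin a × Fin b))) : Prop :=
  (∀ i : ℕ, i + 1 < a → ∃ c d : Fin a × Fin b,
      s(c, d) ∈ T ∧ c.2 = d.2 ∧ (d.1 : ℕ) = (c.1 : ℕ) + 1 ∧
      ((c.1 : ℕ) = i ∨ (c.1 : ℕ) = a - 2 - i)) ∧
  (∀ j : ℕ, j + 1 < b → ∃ c d : Fin a × Fin b,
      s(c, d) ∈ T ∧ c.1 = d.1 ∧ (c.2 : ℕ) = j ∧ (d.2 : ℕ) = j + 1) ∧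
  (∃ c d : Fin a × Fin b, s(c, d) ∈ T ∧ (c.2 : ℕ) = b - 1 ∧ (d.2 : ℕ) = 0 ∧
      (d.1 : ℕ) = a - 1 - (c.1 : ℕ))

/-- The Möbius strip board `a″ × b` admits a fault-free domino tiling. -/
def mobFaultFreeTileable (a b : ℕ) : Prop :=
  ∃ T : Set (Sym2 (Fin a × Fin b)), mobIsTiling a b T ∧ mobFaultFree a b T

/-!
A tiling is determined by the edges of cells that its dominoes cross. Double a cut of a fault-free
tiling so that both copies are crossed where the old cut was, and cross a new cut between the copies
exactly in the complementary places: this inserts two columns, or two rows at the middle cut of a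
board of even height, where the insertion is compatible with the half-twist. The new cut is crossed,
since an old cut crossed everywhere would leave a neighboring cut without any crossing. A board of
odd height has no middle cut. If its length is even, add a row of horizontal dominoes above it and
another one below it. The only faults are then the cuts on the boundary of the old board, which are
one cut of the Möbius strip, and turning a `2 × 2` block that straddles it removes this fault.
-/

/-- A domino tiling of the Möbius board `a″ × b` in terms of the cuts crossed by its dominoes.
`h i j` is `1` if a domino crosses the left edge of the cell `(i, j)` and `0` otherwise, where
`h i b` refers to the right edge of `(i, b - 1)`; similarly `v i j` refers to the upper edge of
`(i, j)` and `v a j` to the lower edge of `(a - 1, j)`. The values are natural numbers so that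
"exactly one edge of each cell is crossed" becomes a linear equation, which also forces them to be
`0` or `1`. -/
structure MobCutTiling (a b : ℕ) (h v : ℕ → ℕ → ℕ) : Prop where
  cell : ∀ i < a, ∀ j < b, h i j + h i (j + 1) + (v i j + v (i + 1) j) = 1
  seam : ∀ i < a, h i b = h (a - 1 - i) 0
  top : ∀ j < b, v 0 j = 0
  bottom : ∀ j < b, v a j = 0

/-- A tiling in terms of crossed cuts, as in `MobCutTiling`, which is fault-free. The seam is the
vertical cut `0`, and the half-twist identifies the horizontal cuts `i` and `a - i`. -/
structure MobFaultFreeCuts (a b : ℕ) (h v : ℕ → ℕ → ℕ) : Prop extends MobCutTiling a b h v where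
  col_cut : ∀ j < b, ∃ i < a, h i j = 1
  row_cut : ∀ i < a, 0 < i → ∃ j < b, v i j = 1 ∨ v (a - i) j = 1

section Dominoes

lemma existsUnique_mem_fromRel {α : Type*} {r : α → α → Prop} (sym : Std.Symm r) {x : α}
    (hx : ∃! y, r x y) : ∃! p, p ∈ Sym2.fromRel sym ∧ x ∈ p := by
  obtain ⟨y, hy, hunique⟩ := hx
  refine ⟨s(x, y), ⟨hy, Sym2.mem_mk_left x y⟩, ?_⟩
  rintro p ⟨hp, hxp⟩
  obtain ⟨z, rfl⟩ := Sym2.mem_iff_exists.mp hxp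
  rw [hunique z hp]

/-- The cells `c` and `d` form a domino of the tiling given by `h` and `v`: `d` is the right, left,
lower or upper neighbor of `c`, and the edge of `c` towards `d` is crossed. -/
def MobPartner (a b : ℕ) (h v : ℕ → ℕ → ℕ) (c d : Fin a × Fin b) : Prop :=
  (h c.1 (c.2 + 1) = 1 ∧ ((d.1 : ℕ) = c.1 ∧ (d.2 : ℕ) = c.2 + 1 ∨
    (c.2 : ℕ) + 1 = b ∧ (d.2 : ℕ) = 0 ∧ (d.1 : ℕ) = a - 1 - c.1)) ∨
  (h c.1 c.2 = 1 ∧ ((d.1 : ℕ) = c.1 ∧ (c.2 : ℕ) = d.2 + 1 ∨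
    (c.2 : ℕ) = 0 ∧ (d.2 : ℕ) + 1 = b ∧ (d.1 : ℕ) = a - 1 - c.1)) ∨
  (v (c.1 + 1) c.2 = 1 ∧ (d.1 : ℕ) = c.1 + 1 ∧ (d.2 : ℕ) = c.2) ∨
  (v c.1 c.2 = 1 ∧ (c.1 : ℕ) = d.1 + 1 ∧ (d.2 : ℕ) = c.2)

variable {a b : ℕ} {h v : ℕ → ℕ → ℕ}

lemma MobPartner.mobAdj {c d : Fin a × Fin b} (hcd : MobPartner a b h v c d) :
    mobAdj a b c d := by
  simp only [MobPartner, _root_.mobAdj, Fin.ext_iff] at *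
  omega

namespace MobCutTiling

lemma symm_mobPartner (H : MobCutTiling a b h v) : Std.Symm (MobPartner a b h v) where
  symm := by
    rintro ⟨⟨i, hi⟩, j, hj⟩ ⟨⟨i', hi'⟩, j', hj'⟩
      (⟨hc, ⟨hrow, hcol⟩ | ⟨hb, hcol, hrow⟩⟩ | ⟨hc, ⟨hrow, hcol⟩ | ⟨hcol, hb, hrow⟩⟩ |
        ⟨hc, hrow, hcol⟩ | ⟨hc, hrow, hcol⟩) <;>
      dsimp only at hc hrow hcol
    · subst hrow hcol
      exact Or.inr (Or.inl ⟨hc, Or.inl ⟨rfl, rfl⟩⟩)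
    · dsimp only at hb
      refine Or.inr (Or.inl ⟨?_, Or.inr ⟨hcol, hb, by dsimp only; omega⟩⟩)
      rwa [hb, H.seam i hi, ← hrow, ← hcol] at hc
    · subst hrow hcol
      exact Or.inl ⟨hc, Or.inl ⟨rfl, rfl⟩⟩
    · dsimp only at hb
      refine Or.inl ⟨?_, Or.inr ⟨hb, hcol, by dsimp only; omega⟩⟩
      dsimp only
      rwa [hb, H.seam i' hi', show a - 1 - i' = i by omega, ← hcol]
    · subst hrow hcol
      exact Or.inr (Or.inr (Or.inr ⟨hc, rfl, rfl⟩))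
    · subst hrow hcol
      exact Or.inr (Or.inr (Or.inl ⟨hc, rfl, rfl⟩))

lemma exists_mobPartner (H : MobCutTiling a b h v) (c : Fin a × Fin b) :
    ∃ d, MobPartner a b h v c d := by
  obtain ⟨⟨i, hi⟩, j, hj⟩ := c
  have hcell := H.cell i hi j hj
  obtain hright | hleft | hdown | hup :
      h i (j + 1) = 1 ∨ h i j = 1 ∨ v (i + 1) j = 1 ∨ v i j = 1 := by omega
  · rcases (Nat.succ_le_of_lt hj).lt_or_eq with hj' | hj'
    · exact ⟨(⟨i, hi⟩, ⟨j + 1, hj'⟩), Or.inl ⟨hright, Or.inl ⟨rfl, rfl⟩⟩⟩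
    · exact ⟨(⟨a - 1 - i, by omega⟩, ⟨0, by omega⟩),
        Or.inl ⟨hright, Or.inr ⟨hj', rfl, rfl⟩⟩⟩
  · rcases j with _ | j
    · exact ⟨(⟨a - 1 - i, by omega⟩, ⟨b - 1, by omega⟩),
        Or.inr (Or.inl ⟨hleft, Or.inr ⟨rfl, Nat.sub_add_cancel hj, rfl⟩⟩)⟩
    · exact ⟨(⟨i, hi⟩, ⟨j, by omega⟩), Or.inr (Or.inl ⟨hleft, Or.inl ⟨rfl, rfl⟩⟩)⟩
  · have hi' : i + 1 < a := by
      by_contra! hle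
      rw [show i + 1 = a by omega, H.bottom j hj] at hdown
      omega
    exact ⟨(⟨i + 1, hi'⟩, ⟨j, hj⟩), Or.inr (Or.inr (Or.inl ⟨hdown, rfl, rfl⟩))⟩
  · rcases i with _ | i
    · rw [H.top j hj] at hup
      omega
    · exact ⟨(⟨i, by omega⟩, ⟨j, hj⟩), Or.inr (Or.inr (Or.inr ⟨hup, rfl, rfl⟩))⟩

lemma mobPartner_unique (H : MobCutTiling a b h v) {c d e : Fin a × Fin b}
    (hd : MobPartner a b h v c d) (he : MobPartner a b h v c e) : d = e := by
  have hcell := H.cell c.1 c.1.isLt c.2 c.2.isLt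
  simp only [MobPartner, Prod.ext_iff, Fin.ext_iff] at *
  omega

lemma mobIsTiling_fromRel (H : MobCutTiling a b h v) :
    mobIsTiling a b (Sym2.fromRel H.symm_mobPartner) := by
  refine ⟨fun p ↦ ?_, fun x ↦ existsUnique_mem_fromRel _ ?_⟩
  · induction p with
    | _ c d => exact fun hcd ↦ ⟨c, d, hcd.mobAdj, rfl⟩
  · obtain ⟨y, hy⟩ := H.exists_mobPartner x
    exact ⟨y, hy, fun z hz ↦ H.mobPartner_unique hz hy⟩

end MobCutTiling

namespace MobFaultFreeCuts

lemma mobFaultFree_fromRel (hb : 0 < b) (H : MobFaultFreeCuts a b h v) :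
    mobFaultFree a b (Sym2.fromRel H.symm_mobPartner) := by
  refine ⟨fun i hi ↦ ?_, fun j hj ↦ ?_, ?_⟩
  · have crossed {k j : ℕ} (hk : k + 1 < a) (hj : j < b) (hv : v (k + 1) j = 1) :
        s((⟨k, by omega⟩, ⟨j, hj⟩), (⟨k + 1, hk⟩, ⟨j, hj⟩)) ∈
          Sym2.fromRel H.symm_mobPartner :=
      Or.inr (Or.inr (Or.inl ⟨hv, rfl, rfl⟩))
    obtain ⟨j, hj, hv | hv⟩ := H.row_cut (i + 1) hi i.succ_pos
    · exact ⟨_, _, crossed hi hj hv, rfl, rfl, Or.inl rfl⟩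
    · rw [show a - (i + 1) = a - 2 - i + 1 by omega] at hv
      exact ⟨_, _, crossed (by omega) hj hv, rfl, rfl, Or.inr rfl⟩
  · obtain ⟨i, hi, hh⟩ := H.col_cut (j + 1) hj
    exact ⟨(⟨i, hi⟩, ⟨j, by omega⟩), (⟨i, hi⟩, ⟨j + 1, hj⟩),
      Or.inl ⟨hh, Or.inl ⟨rfl, rfl⟩⟩, rfl, rfl, rfl⟩
  · obtain ⟨i, hi, hh⟩ := H.col_cut 0 hb
    refine ⟨(⟨a - 1 - i, by omega⟩, ⟨b - 1, by omega⟩), (⟨i, hi⟩, ⟨0, hb⟩), ?_, rfl, rfl, ?_⟩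
    · refine H.symm_mobPartner.symm _ _ (Or.inr (Or.inl ⟨hh, Or.inr ⟨rfl, ?_, rfl⟩⟩))
      exact Nat.sub_add_cancel hb
    · dsimp only
      omega

lemma mobFaultFreeTileable (hb : 0 < b) (H : MobFaultFreeCuts a b h v) :
    mobFaultFreeTileable a b :=
  ⟨_, H.mobIsTiling_fromRel, H.mobFaultFree_fromRel hb⟩

end MobFaultFreeCuts

end Dominoes

section Insertion

/-- The sequence `f` of values on the cuts of a line of cells after insertion of two cells at the
cut `k`. That cut becomes the two outer cuts of the new pair of cells, and the cut in the middle of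
the pair has the complementary value `1 - f k`. -/
def insertCuts (k : ℕ) (f : ℕ → ℕ) (i : ℕ) : ℕ :=
  if i ≤ k then f i else if i = k + 1 then 1 - f k else f (i - 2)

/-- The sequence `f` of values on the cells of a line after insertion of two cells with value `0`
at the cut `k`, that is, in front of the cell `k`. -/
def insertZeros (k : ℕ) (f : ℕ → ℕ) (i : ℕ) : ℕ :=
  if i < k then f i else if i < k + 2 then 0 else f (i - 2)

variable {k i n : ℕ} {f g q : ℕ → ℕ}

lemma insertCuts_of_le (hi : i ≤ k) : insertCuts k f i = f i := if_pos hi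

lemma insertCuts_add_one : insertCuts k f (k + 1) = 1 - f k := by simp [insertCuts]

lemma insertCuts_add_two (hi : k ≤ i) : insertCuts k f (i + 2) = f i := by
  grind [insertCuts]

lemma insertZeros_of_lt (hi : i < k) : insertZeros k f i = f i := if_pos hi

lemma insertZeros_self : insertZeros k f k = 0 := by simp [insertZeros]

lemma insertZeros_add_one : insertZeros k f (k + 1) = 0 := by simp [insertZeros]

lemma insertZeros_add_two (hi : k ≤ i) : insertZeros k f (i + 2) = f i := by
  grind [insertZeros]

lemma insertCuts_cell (hk : k ≤ n) (hqk : q k ≤ 1)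
    (hcell : ∀ i < n, q i + q (i + 1) + (f i + g i) = 1) (hi : i < n + 2) :
    insertCuts k q i + insertCuts k q (i + 1) + (insertZeros k f i + insertZeros k g i) = 1 := by
  obtain hlt | rfl | rfl | ⟨l, hl, rfl⟩ : i < k ∨ i = k ∨ i = k + 1 ∨ ∃ l, k ≤ l ∧ i = l + 2 := by
    by_cases hik : k + 2 ≤ i
    · exact Or.inr (Or.inr (Or.inr ⟨i - 2, by omega, by omega⟩))
    · omega
  · rw [insertCuts_of_le hlt.le, insertCuts_of_le (Nat.succ_le_of_lt hlt), insertZeros_of_lt hlt,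
      insertZeros_of_lt hlt, hcell i (by omega)]
  · rw [insertCuts_of_le le_rfl, insertCuts_add_one, insertZeros_self, insertZeros_self]
    omega
  · rw [insertCuts_add_one, insertCuts_add_two le_rfl, insertZeros_add_one, insertZeros_add_one]
    omega
  · rw [insertCuts_add_two hl, show l + 2 + 1 = l + 1 + 2 from rfl,
      insertCuts_add_two (by omega), insertZeros_add_two hl, insertZeros_add_two hl,
      hcell l (by omega)]

end Insertion

section SurroundTurn

/-- The vertical cuts crossed after surrounding a board of height `a` by two rows of horizontal
dominoes, which cross the odd cuts. -/
def surroundColCuts (a : ℕ) (h : ℕ → ℕ → ℕ) (i j : ℕ) : ℕ :=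
  if i = 0 ∨ i = a + 1 then j % 2 else h (i - 1) j

/-- The horizontal cuts crossed by the tiling with vertical cuts `surroundColCuts`. -/
def surroundRowCuts (a : ℕ) (v : ℕ → ℕ → ℕ) (i j : ℕ) : ℕ :=
  if i = 0 ∨ i = a + 2 then 0 else v (i - 1) j

/-- The vertical cuts crossed after turning the two horizontal dominoes of the `2 × 2` block with
upper left cell `(r, c)`. -/
def turnColCuts (r c : ℕ) (h : ℕ → ℕ → ℕ) (i j : ℕ) : ℕ :=
  if (i = r ∨ i = r + 1) ∧ j = c + 1 then 0 else h i j

/-- The horizontal cuts crossed by the tiling with vertical cuts `turnColCuts`. -/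
def turnRowCuts (r c : ℕ) (v : ℕ → ℕ → ℕ) (i j : ℕ) : ℕ :=
  if i = r + 1 ∧ (j = c ∨ j = c + 1) then 1 else v i j

namespace MobCutTiling

variable {a b r c : ℕ} {h v : ℕ → ℕ → ℕ}

lemma surround (hb : Even b) (H : MobCutTiling a b h v) :
    MobCutTiling (a + 2) b (surroundColCuts a h) (surroundRowCuts a v) where
  cell i hi j hj := by
    have htop := H.top j hj
    have hbottom := H.bottom j hj
    have hcell := H.cell (i - 1)
    grind [surroundColCuts, surroundRowCuts]
  seam i hi := by
    by_cases h_outer : i = 0 ∨ i = a + 1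
    · grind [surroundColCuts]
    · obtain ⟨l, rfl⟩ := Nat.exists_eq_add_of_le' (show 1 ≤ i by omega)
      have hseam := H.seam l (by omega)
      grind [surroundColCuts]
  top _ _ := by simp [surroundRowCuts]
  bottom _ _ := by simp [surroundRowCuts]

lemma turn (hr : r + 1 < a) (hc : c + 1 < b)
    (h_upper : h r (c + 1) = 1) (h_lower : h (r + 1) (c + 1) = 1) (H : MobCutTiling a b h v) :
    MobCutTiling a b (turnColCuts r c h) (turnRowCuts r c v) where
  cell i hi j hj := by
    have hcell := H.cell i hi j hj
    grind [turnColCuts, turnRowCuts]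
  seam i hi := by
    have hseam := H.seam i hi
    grind [turnColCuts]
  top j hj := by
    have htop := H.top j hj
    grind [turnRowCuts]
  bottom j hj := by
    have hbottom := H.bottom j hj
    grind [turnRowCuts]

end MobCutTiling

end SurroundTurn

namespace MobFaultFreeCuts

variable {a b : ℕ} {h v : ℕ → ℕ → ℕ}

section Columns

lemma exists_seam_eq_zero (hb : 2 ≤ b) (H : MobFaultFreeCuts a b h v) : ∃ i < a, h i 0 = 0 := by
  obtain ⟨i, hi, hh⟩ := H.col_cut 1 hb
  have hcell : h i 0 + h i 1 + _ = 1 := H.cell i hi 0 (by omega)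
  exact ⟨i, hi, by omega⟩

lemma insertColumns (hb : 2 ≤ b) (H : MobFaultFreeCuts a b h v) :
    MobFaultFreeCuts a (b + 2) (fun i ↦ insertCuts 0 (h i)) (fun i ↦ insertZeros 0 (v i)) where
  cell i hi j hj := by
    have hcell := H.cell i hi 0 (by omega)
    exact insertCuts_cell b.zero_le (by omega) (H.cell i hi) hj
  seam i hi := by
    simp only [insertCuts_add_two b.zero_le, insertCuts_of_le le_rfl, H.seam i hi]
  top j hj := by
    have htop := H.top (j - 2)
    grind [insertZeros]
  bottom j hj := by
    have hbottom := H.bottom (j - 2)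
    grind [insertZeros]
  col_cut j hj := by
    rcases j with _ | _ | j
    · simpa only [insertCuts_of_le le_rfl] using H.col_cut 0 (by omega)
    · obtain ⟨i, hi, hh⟩ := H.exists_seam_eq_zero hb
      exact ⟨i, hi, by simp only [insertCuts_add_one, hh]⟩
    · simpa only [insertCuts_add_two j.zero_le] using H.col_cut j (by omega)
  row_cut i hi hpos := by
    obtain ⟨j, hj, hv⟩ := H.row_cut i hi hpos
    exact ⟨j + 2, by omega, by simpa only [insertZeros_add_two j.zero_le] using hv⟩

lemma exists_add_columns (hb : 2 ≤ b) (H : ∃ h v, MobFaultFreeCuts a b h v) (m : ℕ) :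
    ∃ h v, MobFaultFreeCuts a (b + 2 * m) h v := by
  induction m with
  | zero => exact H
  | succ m ih =>
    obtain ⟨h, v, hm⟩ := ih
    exact ⟨_, _, hm.insertColumns (Nat.le_add_right_of_le hb)⟩

end Columns

section MiddleRows

variable {k : ℕ}

lemma exists_middle_eq_zero (hk : 2 ≤ k) (H : MobFaultFreeCuts (2 * k) b h v) :
    ∃ j < b, v k j = 0 := by
  obtain ⟨k, rfl⟩ := Nat.exists_eq_add_of_le' hk
  obtain ⟨j, hj, hv⟩ := H.row_cut (k + 3) (by omega) (by omega)
  rw [show 2 * (k + 2) - (k + 3) = k + 1 by omega] at hv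
  have habove : _ + (v (k + 1) j + v (k + 2) j) = 1 := H.cell (k + 1) (by omega) j hj
  have hbelow : _ + (v (k + 2) j + v (k + 3) j) = 1 := H.cell (k + 2) (by omega) j hj
  exact ⟨j, hj, by omega⟩

lemma insertMiddleRows (hk : 2 ≤ k) (H : MobFaultFreeCuts (2 * k) b h v) :
    MobFaultFreeCuts (2 * (k + 1)) b (fun i j ↦ insertZeros k (h · j) i)
      (fun i j ↦ insertCuts k (v · j) i) where
  cell i hi j hj := by
    have hcell := H.cell k (by omega) j hj
    rw [add_comm]
    exact insertCuts_cell (n := 2 * k) (by omega) (by omega)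
      (fun l hl ↦ by rw [add_comm]; exact H.cell l hl j hj) hi
  seam i hi := by
    have hseam := H.seam i
    have hseam' := H.seam (i - 2)
    grind [insertZeros]
  top j hj := (insertCuts_of_le k.zero_le).trans (H.top j hj)
  bottom j hj := (insertCuts_add_two (i := 2 * k) (by omega)).trans (H.bottom j hj)
  col_cut j hj := by
    obtain ⟨i, hi, hh⟩ := H.col_cut j hj
    rcases lt_or_ge i k with hik | hik
    · exact ⟨i, by omega, (insertZeros_of_lt hik).trans hh⟩
    · exact ⟨i + 2, by omega, (insertZeros_add_two hik).trans hh⟩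
  row_cut i hi hpos := by
    obtain hik | rfl | hik : i ≤ k ∨ i = k + 1 ∨ k + 2 ≤ i := by omega
    · obtain ⟨j, hj, hv⟩ := H.row_cut i (by omega) hpos
      refine ⟨j, hj, ?_⟩
      rwa [insertCuts_of_le hik, show 2 * (k + 1) - i = 2 * k - i + 2 by omega,
        insertCuts_add_two (by omega)]
    · obtain ⟨j, hj, hv⟩ := H.exists_middle_eq_zero hk
      exact ⟨j, hj, Or.inl (by rw [insertCuts_add_one, hv])⟩
    · obtain ⟨l, rfl⟩ := Nat.exists_eq_add_of_le' (show 2 ≤ i by omega)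
      obtain ⟨j, hj, hv⟩ := H.row_cut l (by omega) (by omega)
      refine ⟨j, hj, ?_⟩
      rwa [insertCuts_add_two (by omega), show 2 * (k + 1) - (l + 2) = 2 * k - l by omega,
        insertCuts_of_le (by omega)]

lemma exists_add_middle_rows (hk : 2 ≤ k) (H : ∃ h v, MobFaultFreeCuts (2 * k) b h v) (n : ℕ) :
    ∃ h v, MobFaultFreeCuts (2 * (k + n)) b h v := by
  induction n with
  | zero => exact H
  | succ n ih =>
    obtain ⟨h, v, hn⟩ := ih
    exact ⟨_, _, hn.insertMiddleRows (Nat.le_add_right_of_le hk)⟩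

end MiddleRows

section OuterRows

variable {c : ℕ}

lemma surround_turn (hb : Even b) (hc : Even c) (hcb : c + 1 < b) (h_top : h 0 (c + 1) = 1)
    (H : MobFaultFreeCuts a b h v) :
    MobFaultFreeCuts (a + 2) b (turnColCuts 0 c (surroundColCuts a h))
      (turnRowCuts 0 c (surroundRowCuts a v)) where
  toMobCutTiling := by
    have ha : 0 < a := (H.col_cut (c + 1) hcb).elim fun i hi ↦ i.zero_le.trans_lt hi.1
    refine (H.toMobCutTiling.surround hb).turn (Nat.lt_add_left a one_lt_two) hcb ?_ ?_
    · grind [surroundColCuts]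
    · grind [surroundColCuts]
  col_cut j hj := by
    obtain ⟨i, hi, hh⟩ := H.col_cut j hj
    rcases Nat.even_or_odd j with hj2 | hj2
    · exact ⟨i + 1, by omega, by grind [surroundColCuts, turnColCuts]⟩
    · exact ⟨a + 1, by omega, by grind [surroundColCuts, turnColCuts]⟩
  row_cut i hi hpos := by
    obtain ⟨l, rfl⟩ := Nat.exists_eq_add_of_le' hpos
    by_cases h_outer : l = 0 ∨ l = a
    · exact ⟨c, by omega, by grind [turnRowCuts]⟩
    · obtain ⟨j, hj, hv⟩ := H.row_cut l (by omega) (by omega)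
      exact ⟨j, hj, by grind [surroundRowCuts, turnRowCuts]⟩

lemma exists_add_outer_rows (hb : Even b) (hb4 : 4 ≤ b) (hc : Even c) (hcb : c + 1 < b)
    (h_top : h 0 (c + 1) = 1) (H : MobFaultFreeCuts a b h v) (n : ℕ) :
    ∃ h v, MobFaultFreeCuts (a + 2 * n) b h v := by
  suffices ∃ h v, MobFaultFreeCuts (a + 2 * n) b h v ∧
      ∃ c, Even c ∧ c + 1 < b ∧ h 0 (c + 1) = 1 by
    obtain ⟨h, v, hn, -⟩ := this
    exact ⟨h, v, hn⟩
  induction n with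
  | zero => exact ⟨h, v, H, c, hc, hcb, h_top⟩
  | succ n ih =>
    obtain ⟨h, v, hn, c, hc, hcb, h_top⟩ := ih
    refine ⟨_, _, hn.surround_turn hb hc hcb h_top, ?_⟩
    obtain rfl | hc0 := eq_or_ne c 0
    · exact ⟨2, even_two, hb4, rfl⟩
    · exact ⟨0, Even.zero, by omega, by grind [surroundColCuts, turnColCuts]⟩

end OuterRows

end MobFaultFreeCuts

section SmallBoards

/-- The vertical cuts crossed by the tiling in which two adjacent cells form a domino if they have
the same label in `t`. -/
def tableColCuts (a b : ℕ) (t : List (List ℕ)) (i j : ℕ) : ℕ :=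
  let label (i j : ℕ) := (t.getD i []).getD j 0
  let left := if j = 0 then label (a - 1 - i) (b - 1) else label i (j - 1)
  let right := if j = b then label (a - 1 - i) 0 else label i j
  if left = right then 1 else 0

/-- The horizontal cuts crossed by the tiling in which two adjacent cells form a domino if they have
the same label in `t`. -/
def tableRowCuts (a : ℕ) (t : List (List ℕ)) (i j : ℕ) : ℕ :=
  let label (i j : ℕ) := (t.getD i []).getD j 0
  if 0 < i ∧ i < a ∧ label (i - 1) j = label i j then 1 else 0

/-- A fault-free tiling of `4″ × 3`, to be read by `tableColCuts` and `tableRowCuts`. -/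
def table43 : List (List ℕ) :=
  [[1, 1, 2],
   [3, 4, 4],
   [3, 5, 6],
   [2, 5, 6]]

/-- A fault-free tiling of `5″ × 4`, to be read by `tableColCuts` and `tableRowCuts`. -/
def table54 : List (List ℕ) :=
  [[1, 1, 2, 3],
   [4, 4, 2, 5],
   [6, 7, 7, 5],
   [6, 8, 9, 9],
   [3, 8, 10, 10]]

/-- A fault-free tiling of `6″ × 6`, to be read by `tableColCuts` and `tableRowCuts`. -/
def table66 : List (List ℕ) :=
  [[1, 1, 2, 3, 3, 4],
   [5, 5, 2, 6, 6, 7],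
   [8, 9, 9, 10, 11, 11],
   [8, 12, 12, 10, 13, 14],
   [7, 15, 16, 16, 13, 14],
   [4, 15, 17, 17, 18, 18]]

/-- A fault-free tiling of `8″ × 4`, to be read by `tableColCuts` and `tableRowCuts`. -/
def table84 : List (List ℕ) :=
  [[1, 1, 2, 3],
   [4, 4, 2, 5],
   [6, 7, 7, 5],
   [6, 8, 9, 10],
   [10, 8, 9, 11],
   [12, 13, 13, 11],
   [12, 14, 15, 15],
   [3, 14, 16, 16]]

lemma faultFreeCuts_table43 :
    MobFaultFreeCuts 4 3 (tableColCuts 4 3 table43) (tableRowCuts 4 table43) := by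
  refine ⟨⟨?_, ?_, ?_, ?_⟩, ?_, ?_⟩ <;> decide

lemma faultFreeCuts_table54 :
    MobFaultFreeCuts 5 4 (tableColCuts 5 4 table54) (tableRowCuts 5 table54) := by
  refine ⟨⟨?_, ?_, ?_, ?_⟩, ?_, ?_⟩ <;> decide

lemma faultFreeCuts_table66 :
    MobFaultFreeCuts 6 6 (tableColCuts 6 6 table66) (tableRowCuts 6 table66) := by
  refine ⟨⟨?_, ?_, ?_, ?_⟩, ?_, ?_⟩ <;> decide

lemma faultFreeCuts_table84 :
    MobFaultFreeCuts 8 4 (tableColCuts 8 4 table84) (tableRowCuts 8 table84) := by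
  refine ⟨⟨?_, ?_, ?_, ?_⟩, ?_, ?_⟩ <;> decide

end SmallBoards

lemma mobFaultFreeTileable_of_even_height {k b : ℕ} (hk : 2 ≤ k) (hb : 2 ≤ b)
    (H : ∃ h v, MobFaultFreeCuts (2 * k) b h v) (n m : ℕ) :
    mobFaultFreeTileable (2 * k + 2 * n) (b + 2 * m) := by
  have htall := MobFaultFreeCuts.exists_add_middle_rows hk H n
  obtain ⟨h, v, hwide⟩ := MobFaultFreeCuts.exists_add_columns hb htall m
  rw [← mul_add]
  exact hwide.mobFaultFreeTileable (by omega)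

lemma mobFaultFreeTileable_of_even_length {a b c : ℕ} {h v : ℕ → ℕ → ℕ} (hb : Even b) (hb4 : 4 ≤ b)
    (hc : Even c) (hcb : c + 1 < b) (h_top : h 0 (c + 1) = 1) (H : MobFaultFreeCuts a b h v)
    (n m : ℕ) :
    mobFaultFreeTileable (a + 2 * n) (b + 2 * m) := by
  have htall := H.exists_add_outer_rows hb hb4 hc hcb h_top n
  obtain ⟨h, v, hwide⟩ := MobFaultFreeCuts.exists_add_columns (by omega) htall m
  exact hwide.mobFaultFreeTileable (by omega)

/-- For all natural numbers `n` and `m`, each of the Möbius strip boards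
`(4+2n)″ × (3+2m)`, `(5+2n)″ × (4+2m)`, `(4+2n)″ × (5+2m)`, `(6+2n)″ × (6+2m)`,
and `(8+2n)″ × (4+2m)` admits a fault-free domino tiling. -/
theorem mob_faultFree_families :
    ∀ n m : ℕ,
      mobFaultFreeTileable (4 + 2 * n) (3 + 2 * m) ∧
      mobFaultFreeTileable (5 + 2 * n) (4 + 2 * m) ∧
      mobFaultFreeTileable (4 + 2 * n) (5 + 2 * m) ∧
      mobFaultFreeTileable (6 + 2 * n) (6 + 2 * m) ∧
      mobFaultFreeTileable (8 + 2 * n) (4 + 2 * m) := by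
  intro n m
  have height_four (m : ℕ) : mobFaultFreeTileable (4 + 2 * n) (3 + 2 * m) :=
    mobFaultFreeTileable_of_even_height (k := 2) le_rfl (by decide)
      ⟨_, _, faultFreeCuts_table43⟩ n m
  refine ⟨height_four m, ?_, ?_, ?_, ?_⟩
  · exact mobFaultFreeTileable_of_even_length (by decide) le_rfl Even.zero (by decide) rfl
      faultFreeCuts_table54 n m
  · rw [show 5 + 2 * m = 3 + 2 * (m + 1) by ring]
    exact height_four (m + 1)
  · exact mobFaultFreeTileable_of_even_height (k := 3) (by decide) (by decide)
      ⟨_, _, faultFreeCuts_table66⟩ n m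
  · exact mobFaultFreeTileable_of_even_height (k := 4) (by decide) (by decide)
      ⟨_, _, faultFreeCuts_table84⟩ n m
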